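/- arXiv:2604.15266 — 5 statements merged into one kernel-verified Lean document; each statement's English description precedes it below -/
import Mathlib

section
/- Soundness of the incremental rule (Inc): let (ι, τ, β) be a safety problem over S and A ⊆ S. If A is an inductive invariant for (ι, τ), and the restricted problem (ι ∩ A, τ ∩ (A × A), β ∩ A) is safe, then (ι, τ, β) is safe. -/
variable {S : Type*}

def IsSafe (ι : Set S) (τ : Set (S × S)) (β : Set S) : Prop :=
  ¬ ∃ (n : ℕ) (σ : ℕ → S), (∀ i < n, (σ i, σ (i + 1)) ∈ τ) ∧ σ 0 ∈ ι ∧ σ n ∈ β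

def IsInductiveInv (ι : Set S) (τ : Set (S × S)) (I : Set S) : Prop :=
  ι ⊆ I ∧ ∀ s s', s ∈ I → (s, s') ∈ τ → s' ∈ I

theorem IsInductiveInv.mem_of_trace {ι I : Set S} {τ : Set (S × S)} {n : ℕ} {σ : ℕ → S}
    (hI : IsInductiveInv ι τ I) (hσ : ∀ i < n, (σ i, σ (i + 1)) ∈ τ) (h_init : σ 0 ∈ ι) :
    ∀ i ≤ n, σ i ∈ I := by
  intro i hi
  induction i with
  | zero => exact hI.1 h_init
  | succ i ih => exact hI.2 _ _ (ih (Nat.le_of_succ_le hi)) (hσ i hi)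

/-- Soundness of the incremental rule (Inc): if `A` is an inductive invariant for `(ι, τ)`
and the restricted problem `(ι ∩ A, τ ∩ (A × A), β ∩ A)` is safe, then `(ι, τ, β)` is safe. -/
theorem safe_of_inc (ι β A : Set S) (τ : Set (S × S))
    (hInv : IsInductiveInv ι τ A)
    (hSafe : IsSafe (ι ∩ A) (τ ∩ A ×ˢ A) (β ∩ A)) :
    IsSafe ι τ β := by
  rintro ⟨n, σ, hσ, h_init, h_bad⟩
  have h_mem : ∀ i ≤ n, σ i ∈ A := hInv.mem_of_trace hσ h_init
  have h_trace : ∀ i < n, (σ i, σ (i + 1)) ∈ τ ∩ A ×ˢ A := fun i hi =>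
    ⟨hσ i hi, h_mem i hi.le, h_mem (i + 1) hi⟩
  exact hSafe ⟨n, σ, h_trace, ⟨h_init, h_mem 0 n.zero_le⟩, ⟨h_bad, h_mem n le_rfl⟩⟩
end

section
/- Soundness of the backward incremental rule (B-Inc): let (ι, τ, β) be a safety problem over S and B ⊆ S. If β ⊆ B, B is backward-closed under τ (i.e., (s, s') ∈ τ and s' ∈ B imply s ∈ B), and the restricted problem (ι ∩ B, τ ∩ (B × B), β ∩ B) is safe, then (ι, τ, β) is safe. -/
variable {S : Type*}

section BackwardClosed

variable {B : Set S} {τ : Set (S × S)} {n : ℕ} {σ : ℕ → S}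

theorem mem_of_trace_of_last_mem (hbwd : ∀ s s', (s, s') ∈ τ → s' ∈ B → s ∈ B)
    (hτ : ∀ i < n, (σ i, σ (i + 1)) ∈ τ) (hn : σ n ∈ B) {k : ℕ} (hk : k ≤ n) : σ k ∈ B := by
  induction hk using Nat.decreasingInduction with
  | self => exact hn
  | of_succ i hi ih => exact hbwd _ _ (hτ i hi) ih

theorem trace_inter_prod_of_last_mem (hbwd : ∀ s s', (s, s') ∈ τ → s' ∈ B → s ∈ B)
    (hτ : ∀ i < n, (σ i, σ (i + 1)) ∈ τ) (hn : σ n ∈ B) :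
    ∀ i < n, (σ i, σ (i + 1)) ∈ τ ∩ B ×ˢ B :=
  fun i hi => ⟨hτ i hi, mem_of_trace_of_last_mem hbwd hτ hn hi.le,
    mem_of_trace_of_last_mem hbwd hτ hn hi⟩

end BackwardClosed

/-- Soundness of the backward incremental rule (B-Inc): if `β ⊆ B`, `B` is backward-closed
under `τ`, and the restricted problem `(ι ∩ B, τ ∩ (B × B), β ∩ B)` is safe, then
`(ι, τ, β)` is safe. -/
theorem safe_of_backward_inc (ι β B : Set S) (τ : Set (S × S))
    (hβ : β ⊆ B)
    (hbwd : ∀ s s', (s, s') ∈ τ → s' ∈ B → s ∈ B)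
    (hSafe : IsSafe (ι ∩ B) (τ ∩ B ×ˢ B) (β ∩ B)) :
    IsSafe ι τ β := by
  rintro ⟨n, σ, hτ, hι, hn⟩
  have hnB : σ n ∈ B := hβ hn
  have h0B : σ 0 ∈ B := mem_of_trace_of_last_mem hbwd hτ hnB n.zero_le
  exact hSafe ⟨n, σ, trace_inter_prod_of_last_mem hbwd hτ hnB, ⟨hι, h0B⟩, ⟨hn, hnB⟩⟩
end

section
/- Invariant combination for incremental forward proofs (the (Inc) case of Theorem 4.7): let (ι, τ, β) be a safety problem over S and A ⊆ S. If I₁ is a safe inductive invariant of (ι, τ, S \ A) (so in particular I₁ ⊆ A), and I₂ is a safe inductive invariant of the restricted problem (ι ∩ A, τ ∩ (A × A), β ∩ A), then I₁ ∩ I₂ is a safe inductive invariant of (ι, τ, β). -/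
variable {S : Type*}

def IsSafeInductiveInv (ι : Set S) (τ : Set (S × S)) (β : Set S) (I : Set S) : Prop :=
  IsInductiveInv ι τ I ∧ I ∩ β = ∅

/-!
An inductive invariant `I` confines every execution, so inside `I` nothing is lost by restricting
the safety problem to `I`: a set `J` solves the restricted problem exactly when `I ∩ J` solves the
original one. Safety of `I₁` against `Aᶜ` means `I₁ ⊆ A`, so a solution of the problem restricted
to `A` also solves the smaller problem restricted to `I₁`.
-/

section

variable {ι ι' β β' A I J : Set S} {τ τ' : Set (S × S)}

theorem IsInductiveInv.anti (h : IsInductiveInv ι τ I) (hι : ι' ⊆ ι) (hτ : τ' ⊆ τ) :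
    IsInductiveInv ι' τ' I :=
  ⟨hι.trans h.1, fun s s' hs hss' => h.2 s s' hs (hτ hss')⟩

theorem IsSafeInductiveInv.anti (h : IsSafeInductiveInv ι τ β I)
    (hι : ι' ⊆ ι) (hτ : τ' ⊆ τ) (hβ : β' ⊆ β) : IsSafeInductiveInv ι' τ' β' I :=
  ⟨h.1.anti hι hτ, Set.subset_empty_iff.mp ((Set.inter_subset_inter_right I hβ).trans h.2.subset)⟩

theorem isSafeInductiveInv_compl_iff :
    IsSafeInductiveInv ι τ Aᶜ I ↔ IsInductiveInv ι τ I ∧ I ⊆ A :=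
  and_congr_right' <|
    Set.disjoint_iff_inter_eq_empty.symm.trans Set.disjoint_compl_right_iff_subset

theorem IsInductiveInv.inter_iff (hI : IsInductiveInv ι τ I) :
    IsInductiveInv ι τ (I ∩ J) ↔ IsInductiveInv (ι ∩ I) (τ ∩ I ×ˢ I) J := by
  constructor
  · rintro ⟨hinit, hstep⟩
    exact ⟨fun s hs => (hinit hs.1).2,
      fun s s' hsJ ⟨hss', hsI, _⟩ => (hstep s s' ⟨hsI, hsJ⟩ hss').2⟩
  · rintro ⟨hinit, hstep⟩
    refine ⟨fun s hs => ⟨hI.1 hs, hinit ⟨hs, hI.1 hs⟩⟩, fun s s' ⟨hsI, hsJ⟩ hss' => ?_⟩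
    have hs'I : s' ∈ I := hI.2 s s' hsI hss'
    exact ⟨hs'I, hstep s s' hsJ ⟨hss', hsI, hs'I⟩⟩

theorem IsInductiveInv.isSafeInductiveInv_inter_iff (hI : IsInductiveInv ι τ I) :
    IsSafeInductiveInv ι τ β (I ∩ J) ↔ IsSafeInductiveInv (ι ∩ I) (τ ∩ I ×ˢ I) (β ∩ I) J := by
  have hinter : I ∩ J ∩ β = J ∩ (β ∩ I) := by
    rw [Set.inter_assoc, Set.inter_comm, Set.inter_assoc]
  exact and_congr hI.inter_iff (by rw [hinter])

end

/-- Invariant combination for incremental forward proofs (the (Inc) case of Theorem 4.7):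
if `I₁` is a safe inductive invariant of `(ι, τ, S \ A)` and `I₂` is a safe inductive
invariant of `(ι ∩ A, τ ∩ (A × A), β ∩ A)`, then `I₁ ∩ I₂` is a safe inductive invariant
of `(ι, τ, β)`. -/
theorem inc_invariant_combination (ι β A I₁ I₂ : Set S) (τ : Set (S × S))
    (h1 : IsSafeInductiveInv ι τ Aᶜ I₁)
    (h2 : IsSafeInductiveInv (ι ∩ A) (τ ∩ A ×ˢ A) (β ∩ A) I₂) :
    IsSafeInductiveInv ι τ β (I₁ ∩ I₂) := by
  obtain ⟨hI₁, hI₁A⟩ := isSafeInductiveInv_compl_iff.mp h1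
  exact hI₁.isSafeInductiveInv_inter_iff.mpr <|
    h2.anti (Set.inter_subset_inter_right ι hI₁A)
      (Set.inter_subset_inter_right τ (Set.prod_mono hI₁A hI₁A))
      (Set.inter_subset_inter_right β hI₁A)
end

section
/- Forward-backward invariant combination: let (ι, τ, β) be a safety problem over S and B, F ⊆ S. Suppose β ⊆ B; B is backward-closed under τ (i.e., (s, s') ∈ τ and s' ∈ B imply s ∈ B); and F is a safe inductive invariant of the restricted problem (ι ∩ B, τ ∩ (B × B), β ∩ B). Then (S \ B) ∪ F is a safe inductive invariant of (ι, τ, β). (This is the invariant construction Inv⇌ applied to a proof consisting of one backward step followed by one forward step, as in the proofs of Sections 2.1–2.2.) -/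
variable {S : Type*}

section

variable {ι ι₁ ι₂ β B F G : Set S} {τ : Set (S × S)}

theorem IsInductiveInv.isSafeInductiveInv_compl
    (hB : IsInductiveInv β (Prod.swap ⁻¹' τ) B) (hι : ι ⊆ Bᶜ) :
    IsSafeInductiveInv ι τ β Bᶜ := by
  obtain ⟨hβ, hbwd⟩ := hB
  refine ⟨⟨hι, fun s s' hs hτ hs' ↦ hs (hbwd s' s hs' hτ)⟩, ?_⟩
  exact (Set.disjoint_compl_left_iff_subset.mpr hβ).inter_eq

theorem IsInductiveInv.union_of_restrict_compl
    (hG : IsInductiveInv ι₁ τ G)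
    (hF : IsInductiveInv ι₂ (τ ∩ Gᶜ ×ˢ Gᶜ) F) :
    IsInductiveInv (ι₁ ∪ ι₂) τ (G ∪ F) := by
  obtain ⟨hιG, hG_step⟩ := hG
  obtain ⟨hιF, hF_step⟩ := hF
  refine ⟨Set.union_subset_union hιG hιF, fun s s' hs hτ ↦ ?_⟩
  -- No transition leaves `G`, so one ending outside `G` lies in the restricted relation.
  by_cases hs'G : s' ∈ G
  · exact Or.inl hs'G
  · have hsG : s ∉ G := fun hsG ↦ hs'G (hG_step s s' hsG hτ)
    have hsF : s ∈ F := hs.resolve_left hsG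
    exact Or.inr (hF_step s s' hsF ⟨hτ, hsG, hs'G⟩)

theorem IsSafeInductiveInv.union_of_restrict_compl
    (hG : IsSafeInductiveInv ι₁ τ β G)
    (hF : IsSafeInductiveInv ι₂ (τ ∩ Gᶜ ×ˢ Gᶜ) (β ∩ Gᶜ) F) :
    IsSafeInductiveInv (ι₁ ∪ ι₂) τ β (G ∪ F) := by
  obtain ⟨hG_inv, hG_safe⟩ := hG
  obtain ⟨hF_inv, hF_safe⟩ := hF
  refine ⟨hG_inv.union_of_restrict_compl hF_inv, ?_⟩
  have hβG : β ⊆ Gᶜ := (Set.disjoint_iff_inter_eq_empty.mpr hG_safe).subset_compl_left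
  rw [Set.inter_eq_left.mpr hβG] at hF_safe
  rw [Set.union_inter_distrib_right, hG_safe, hF_safe, Set.union_empty]

end

/-- Forward-backward invariant combination: if `β ⊆ B`, `B` is backward-closed under `τ`,
and `F` is a safe inductive invariant of `(ι ∩ B, τ ∩ (B × B), β ∩ B)`, then `(S \ B) ∪ F`
is a safe inductive invariant of `(ι, τ, β)`. -/
theorem forward_backward_invariant_combination (ι β B F : Set S) (τ : Set (S × S))
    (hβ : β ⊆ B)
    (hbwd : ∀ s s', (s, s') ∈ τ → s' ∈ B → s ∈ B)
    (hF : IsSafeInductiveInv (ι ∩ B) (τ ∩ B ×ˢ B) (β ∩ B) F) :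
    IsSafeInductiveInv ι τ β (Bᶜ ∪ F) := by
  have hB : IsInductiveInv β (Prod.swap ⁻¹' τ) B :=
    ⟨hβ, fun s' s hs' hτ ↦ hbwd s s' hτ hs'⟩
  have hBc : IsSafeInductiveInv (ι ∩ Bᶜ) τ β Bᶜ :=
    hB.isSafeInductiveInv_compl Set.inter_subset_right
  rw [← Set.inter_union_compl ι B, Set.union_comm]
  exact hBc.union_of_restrict_compl (by rwa [compl_compl])
end

section
/- Every coordinate of the alternating Boolean formula is essential: define Boolean functions fₙ : (Fin n → Bool) → Bool for n ≥ 1 recursively by f₁(v) = v(0) and f_{n+1}(v) = v(0) && !(fₙ(v ∘ succ)), so that fₙ(v) = v₁ ∧ (¬v₂ ∨ (v₃ ∧ (¬v₄ ∨ ⋯))). Then for every n ≥ 1 and every index i ∈ Fin n, there exist assignments u, u' : Fin n → Bool that agree on all coordinates except i and satisfy fₙ(u) ≠ fₙ(u'). In particular, fₙ cannot be expressed as a Boolean function of fewer than n of its coordinates. -/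
/-- The alternating Boolean function: `f 0 v = v 0` (i.e. `f₁`) and
`f (n+1) v = v 0 && !(f n (v ∘ Fin.succ))` (i.e. `f_{n+2}`), so that `f` at size `n + 1`
computes `v₁ ∧ (¬v₂ ∨ (v₃ ∧ (¬v₄ ∨ ⋯)))`. -/
def altBool : (n : ℕ) → (Fin (n + 1) → Bool) → Bool
  | 0, v => v 0
  | n + 1, v => v 0 && !(altBool n (fun i => v i.succ))

theorem altBool_eq_false_of_apply_zero_eq_false {n : ℕ} {v : Fin (n + 1) → Bool} (h : v 0 = false) :
    altBool n v = false := by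
  cases n <;> simp [altBool, h]

theorem altBool_eq_apply_zero_of_apply_one_eq_false {n : ℕ} {v : Fin (n + 1) → Bool}
    (h : ∀ j : Fin (n + 1), (j : ℕ) = 1 → v j = false) : altBool n v = v 0 := by
  cases n with
  | zero => rfl
  | succ n =>
    have tail_false : altBool n (fun j => v j.succ) = false :=
      altBool_eq_false_of_apply_zero_eq_false (h _ rfl)
    simp [altBool, tail_false]

-- Each leading `true` negates the value of its tail; a `false` right after `i` cuts off the rest.
theorem altBool_eq_apply_xor_bodd {n : ℕ} {v : Fin (n + 1) → Bool} {i : Fin (n + 1)}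
    (hlt : ∀ j < i, v j = true) (hsucc : ∀ j : Fin (n + 1), (j : ℕ) = i + 1 → v j = false) :
    altBool n v = (v i ^^ (i : ℕ).bodd) := by
  induction n with
  | zero => simp [Fin.fin_one_eq_zero i, altBool]
  | succ n ih =>
    cases i using Fin.cases with
    | zero => simpa using altBool_eq_apply_zero_of_apply_one_eq_false hsucc
    | succ i =>
      have tail_eq : altBool n (fun j => v j.succ) = (v i.succ ^^ (i : ℕ).bodd) :=
        ih (fun j hj => hlt j.succ (Fin.succ_lt_succ_iff.mpr hj))
          (fun j hj => hsucc j.succ (by simp [hj]))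
      calc
        altBool (n + 1) v = !altBool n (fun j => v j.succ) := by
          simp [altBool, hlt 0 i.succ_pos]
        _ = (v i.succ ^^ (i.succ : ℕ).bodd) := by simp [tail_eq]

theorem altBool_update_decide_lt {n : ℕ} (i : Fin (n + 1)) (b : Bool) :
    altBool n (Function.update (fun j => decide (j < i)) i b) = (b ^^ (i : ℕ).bodd) := by
  let v : Fin (n + 1) → Bool := Function.update (fun j => decide (j < i)) i b
  have hlt : ∀ j < i, v j = true := fun j hj => by simp [v, hj, hj.ne]
  have hsucc : ∀ j : Fin (n + 1), (j : ℕ) = i + 1 → v j = false := fun j hj => by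
    have hij : i < j := Fin.lt_def.mpr (by lia)
    simp [v, hij.ne', hij.le]
  simpa [v] using altBool_eq_apply_xor_bodd hlt hsucc

/-- Every coordinate of the alternating Boolean formula is essential: for every `n ≥ 1`
(here the function of arity `n + 1`) and every index `i`, there exist assignments `u, u'`
that agree on all coordinates except `i` and give different values to the function. -/
theorem altBool_depends_on_every_coordinate (n : ℕ) (i : Fin (n + 1)) :
    ∃ u u' : Fin (n + 1) → Bool,
      (∀ j : Fin (n + 1), j ≠ i → u j = u' j) ∧ altBool n u ≠ altBool n u' := by
  let u (b : Bool) : Fin (n + 1) → Bool := Function.update (fun j => decide (j < i)) i b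
  refine ⟨u true, u false, fun j hj => by simp [u, hj], ?_⟩
  simp [u, altBool_update_decide_lt]
end
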